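/- (Pairing-switch vanishing) Let F : L_n → ΔK be a non-degenerate 2-filtration, and let x ∈ L_n be a grade such that F(x) − F(x−(1,1)) = {σ, τ} with two distinct simplices. Suppose that for every pair of paths p₁, p₂ passing through both x−(1,1) and x and differing only in the intermediate step, the pairing of σ and τ in the induced 1-filtrations is the same (no switch). Then Dgm F[x, ·] = 0 and Dgm F[·, x] = 0, i.e., every interval of the generalized persistence diagram with x as an endpoint has value zero. -/

import Mathlib

noncomputable section
open scoped Classical

variable {V : Type*} [DecidableEq V] [Fintype V]

/-- A finite abstract simplicial complex on vertex set `V`: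
a collection of nonempty finite sets closed under taking nonempty subsets. -/
def IsComplex (K : Finset (Finset V)) : Prop :=
  ∀ s ∈ K, s ≠ ∅ ∧ ∀ t : Finset V, t ⊆ s → t ≠ ∅ → t ∈ K

/-- The space of simplicial chains (all dimensions together) with `ZMod 2` coefficients. -/
abbrev Chn (V : Type*) := Finset V →₀ ZMod 2

/-- The simplicial boundary operator (mod 2). -/
def bdry (V : Type*) [DecidableEq V] : Chn V →ₗ[ZMod 2] Chn V :=
  Finsupp.lsum (ZMod 2) fun s =>
    LinearMap.toSpanSingleton (ZMod 2) (Chn V) (∑ v ∈ s, Finsupp.single (s.erase v) 1)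

/-- The subspace of `d`-chains supported on a complex `L`. -/
def chainsOf (d : ℕ) (L : Finset (Finset V)) : Submodule (ZMod 2) (Chn V) :=
  Submodule.span (ZMod 2)
    ((fun s => Finsupp.single s (1 : ZMod 2)) '' {s : Finset V | s ∈ L ∧ s.card = d + 1})

/-- The subspace `Z_d L` of `d`-cycles of the complex `L`. -/
def cyclesOf (d : ℕ) (L : Finset (Finset V)) : Submodule (ZMod 2) (Chn V) :=
  chainsOf d L ⊓ LinearMap.ker (bdry V)

/-- The subspace `B_d L` of `d`-boundaries of the complex `L`. -/
def boundariesOf (d : ℕ) (L : Finset (Finset V)) : Submodule (ZMod 2) (Chn V) :=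
  Submodule.map (bdry V) (chainsOf (d+1) L)

/-- The birth–death function of a 1-filtration indexed by `Fin (n+1)`:
`ZB_d F [a,b] = dim (Z_d F(a) ⊓ B_d F(b))` for `b ≠ ⊤`, and `dim Z_d F(a)` for `b = ⊤`. -/
def ZBFin (d n : ℕ) (F : Fin (n+1) → Finset (Finset V)) (a b : Fin (n+1)) : ℤ :=
  if b = Fin.last n then (Module.finrank (ZMod 2) ↥(cyclesOf d (F a)) : ℤ)
  else (Module.finrank (ZMod 2) ↥(cyclesOf d (F a) ⊓ boundariesOf d (F b)) : ℤ)

/-- The birth–death function of a 2-filtration indexed by `Fin (n+1) × Fin (n+1)`. -/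
def ZBFin2 (d n : ℕ) (F : Fin (n+1) × Fin (n+1) → Finset (Finset V))
    (a b : Fin (n+1) × Fin (n+1)) : ℤ :=
  if b = (Fin.last n, Fin.last n) then (Module.finrank (ZMod 2) ↥(cyclesOf d (F a)) : ℤ)
  else (Module.finrank (ZMod 2) ↥(cyclesOf d (F a) ⊓ boundariesOf d (F b)) : ℤ)

/-- The birth–death function of a 1-filtration `G : ℕ → complexes` with top index `M`. -/
def ZB1 (d M : ℕ) (G : ℕ → Finset (Finset V)) (a b : ℕ) : ℤ :=
  if b = M then (Module.finrank (ZMod 2) ↥(cyclesOf d (G a)) : ℤ)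
  else (Module.finrank (ZMod 2) ↥(cyclesOf d (G a) ⊓ boundariesOf d (G b)) : ℤ)

/-- A monotone staircase path of `2n` unit steps from `(0,0)` to `(n,n)` in the grid. -/
def IsPath (n : ℕ) (p : ℕ → Fin (n+1) × Fin (n+1)) : Prop :=
  p 0 = (0, 0) ∧ p (2*n) = (Fin.last n, Fin.last n) ∧
  ∀ k < 2*n, p k ≤ p (k+1) ∧
    ((p (k+1)).1 : ℕ) + ((p (k+1)).2 : ℕ) = ((p k).1 : ℕ) + ((p k).2 : ℕ) + 1

/-- The simplices added at steps `k → k+1` and `l → l+1` of the 1-filtration `G` are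
paired: the 1-dimensional persistence diagram (the Möbius inversion of the birth–death
function `ZB1`) is nonzero at the interval `[k+1, l+1]`. -/
def PairedAt (d M : ℕ) (G : ℕ → Finset (Finset V)) (k l : ℕ) : Prop :=
  ZB1 d M G (k+1) (l+1) - ZB1 d M G (k+1) l - ZB1 d M G k (l+1) + ZB1 d M G k l ≠ 0

/-- A lower corner of the appearance curve of a simplex `σ` in a 2-filtration `F`:
a minimal grade at which `σ` is present. -/
def LowerCorner {n : ℕ} (F : Fin (n+1) × Fin (n+1) → Finset (Finset V))
    (σ : Finset V) (a : Fin (n+1) × Fin (n+1)) : Prop :=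
  σ ∈ F a ∧ ∀ b : Fin (n+1) × Fin (n+1), b < a → σ ∉ F b

/-- A 2-filtration is non-degenerate if no two (distinct) lower corners of appearance
curves share a component of a grade. -/
def NonDeg {n : ℕ} (F : Fin (n+1) × Fin (n+1) → Finset (Finset V)) : Prop :=
  ∀ (σ τ : Finset V) (a b : Fin (n+1) × Fin (n+1)),
    LowerCorner F σ a → LowerCorner F τ b → (σ ≠ τ ∨ a ≠ b) →
    a.1 ≠ b.1 ∧ a.2 ≠ b.2

/-- The index of the step (of the two steps `k → k+1 → k+2` around a unit square) of the
path `p` at which the simplex `σ` is added to the filtration. -/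
def stepOf {n : ℕ} (F : Fin (n+1) × Fin (n+1) → Finset (Finset V))
    (p : ℕ → Fin (n+1) × Fin (n+1)) (σ : Finset V) (k : ℕ) : ℕ :=
  if σ ∈ F (p (k+1)) then k else k + 1

/-!
Write `abef` for the value `Z(b,f) - Z(b,e) - Z(a,f) + Z(a,e)` of the 1-dimensional diagram along
a path with steps `a ⋖ b` and `e ⋖ f`, where `Z` is the birth–death function. Let the unit square
below `x` have bottom `a` and sides `b`, `c`. By non-degeneracy `σ` enters at one of `b`, `c`, say
`b`, and `τ` at the other; so `σ` is added by the step `a ⋖ b` on the paths through `b` and by the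
step `c ⋖ x` on the paths through `c`. Since the numbers `abef` are `0` or `1`, the absence of a
switch says that `abef = cxef` and `efab = efcx` for every step `e ⋖ f` above `x` or below `a`.

As `e` increases, the alternating sum of `Z(·, e)` around the square therefore does not change; it
is `0` at `e = x`, because a pairing inside the square would switch and hence no cycle through `σ`
or `τ` is dead at `x`. In the same way the alternating sum of `Z(w, ·)` is `0` for all `w ≤ a`,
starting from `F ⊥ = ∅`. Since every dead cycle in the square already lives in `F a`, this extends
to all `w ≤ x`. Möbius inversion turns the two identities into the vanishing of the row and the
column of `x`.
-/

section LinearAlgebra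

variable {k M : Type*} [Field k] [AddCommGroup M] [Module k M]

theorem finrank_le_finrank_inf_ker_add_one (W : Submodule k M) [FiniteDimensional k W]
    (φ : M →ₗ[k] k) :
    Module.finrank k W ≤ Module.finrank k ↥(W ⊓ LinearMap.ker φ) + 1 := by
  have hrange : Module.finrank k (LinearMap.range (φ.domRestrict W)) ≤ 1 := by
    simpa using Submodule.finrank_le (LinearMap.range (φ.domRestrict W))
  have hker : (LinearMap.ker (φ.domRestrict W)).map W.subtype = W ⊓ LinearMap.ker φ := by
    rw [LinearMap.domRestrict, LinearMap.ker_comp, Submodule.map_comap_subtype]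
  rw [← hker, Submodule.finrank_map_subtype_eq]
  have := (φ.domRestrict W).finrank_range_add_finrank_ker
  lia

theorem finrank_inf_add_finrank_inf_le {A B S T : Submodule k M} [FiniteDimensional k B]
    (hAB : A ≤ B) (hST : S ≤ T) :
    Module.finrank k ↥(B ⊓ S) + Module.finrank k ↥(A ⊓ T) ≤
      Module.finrank k ↥(B ⊓ T) + Module.finrank k ↥(A ⊓ S) := by
  have : FiniteDimensional k A := Submodule.finiteDimensional_of_le hAB
  have hinf : (B ⊓ S) ⊓ (A ⊓ T) = A ⊓ S := by
    rw [inf_inf_inf_comm, inf_eq_right.2 hAB, inf_eq_left.2 hST]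
  rw [← Submodule.finrank_sup_add_finrank_inf_eq, hinf]
  gcongr
  exact Submodule.finrank_mono (sup_le (inf_le_inf_left _ hST) (inf_le_inf_right _ hAB))

end LinearAlgebra

section UnitSquare

/-- The unit square of the grid with bottom `a`, intermediate grades `b` and `c`, and top `x`,
described through the order alone. -/
structure IsUnitSquare {α : Type*} [SemilatticeInf α] (a b c x : α) : Prop where
  inf_eq : b ⊓ c = a
  bot_covBy_left : a ⋖ b
  bot_covBy_right : a ⋖ c
  left_covBy_top : b ⋖ x
  right_covBy_top : c ⋖ x
  le_or_le_of_lt : ∀ ⦃w⦄, w < x → w ≤ b ∨ w ≤ c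

variable {α : Type*} [SemilatticeInf α] {a b c x : α}

theorem IsUnitSquare.symm (hsq : IsUnitSquare a b c x) : IsUnitSquare a c b x where
  inf_eq := inf_comm c b ▸ hsq.inf_eq
  bot_covBy_left := hsq.bot_covBy_right
  bot_covBy_right := hsq.bot_covBy_left
  left_covBy_top := hsq.right_covBy_top
  right_covBy_top := hsq.left_covBy_top
  le_or_le_of_lt _ hw := (hsq.le_or_le_of_lt hw).symm

theorem IsUnitSquare.bot_lt_top (hsq : IsUnitSquare a b c x) : a < x :=
  hsq.bot_covBy_left.lt.trans hsq.left_covBy_top.lt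

theorem IsUnitSquare.sum_sub_sum_sub_sum_add_sum [Fintype α] [DecidableLE α] {G : Type*}
    [AddCommGroup G] (hsq : IsUnitSquare a b c x) (φ : α → G) :
    ∑ y with y ≤ x, φ y - ∑ y with y ≤ b, φ y - ∑ y with y ≤ c, φ y + ∑ y with y ≤ a, φ y =
      φ x := by
  let lower (z : α) : Finset α := {y | y ≤ z}
  have hunion : lower x = insert x (lower b ∪ lower c) := by
    ext y
    simp only [lower, Finset.mem_filter_univ, Finset.mem_insert, Finset.mem_union]
    refine ⟨fun hy => hy.eq_or_lt.imp_right (hsq.le_or_le_of_lt ·), ?_⟩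
    rintro (rfl | hy | hy)
    exacts [le_rfl, hy.trans hsq.left_covBy_top.le, hy.trans hsq.right_covBy_top.le]
  have hinter : lower b ∩ lower c = lower a := by
    ext y
    simp only [lower, Finset.mem_inter, Finset.mem_filter_univ, ← le_inf_iff, hsq.inf_eq]
  have hx : x ∉ lower b ∪ lower c := by
    simp [lower, hsq.left_covBy_top.lt.not_ge, hsq.right_covBy_top.lt.not_ge]
  have hincl_excl := Finset.sum_union_inter (s₁ := lower b) (s₂ := lower c) (f := φ)
  rw [hinter] at hincl_excl
  change ∑ y ∈ lower x, φ y - ∑ y ∈ lower b, φ y - ∑ y ∈ lower c, φ y + ∑ y ∈ lower a, φ y = φ x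
  rw [hunion, Finset.sum_insert hx, sub_sub, ← hincl_excl]
  abel

end UnitSquare

section MobiusInversion

variable {α : Type*} [PartialOrder α] [Fintype α] [DecidableLE α]

/-- The function `g` on the intervals of `α` is the Möbius inversion of `f` for the product order
on the endpoints. -/
def IsMobiusInversion (f g : α → α → ℤ) : Prop :=
  ∀ c e, c ≤ e → f c e = ∑ a, ∑ b, if a ≤ b ∧ a ≤ c ∧ b ≤ e then g a b else 0

theorem eq_zero_of_forall_sum_le_eq_zero {G : Type*} [AddCommMonoid G] {P : α → Prop}
    [DecidablePred P] {φ : α → G} (h : ∀ y, P y → ∑ z with P z ∧ z ≤ y, φ z = 0) :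
    ∀ y, P y → φ y = 0 := by
  intro y
  induction y using WellFoundedLT.induction with
  | ind y ih =>
    intro hy
    rw [← h y hy, Finset.sum_eq_single_of_mem y (by simp [hy])]
    intro z hz hzy
    rw [Finset.mem_filter_univ] at hz
    exact ih z (hz.2.lt_of_ne hzy) hz.1

theorem IsMobiusInversion.eq_sum_birth {f g : α → α → ℤ} (hfg : IsMobiusInversion f g) {c e : α}
    (hce : c ≤ e) : f c e = ∑ a with a ≤ c, ∑ b with a ≤ b ∧ b ≤ e, g a b := by
  simp only [hfg c e hce, Finset.sum_filter]
  refine Finset.sum_congr rfl fun a _ => ?_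
  split_ifs with ha <;> simp [ha]

theorem IsMobiusInversion.eq_sum_death {f g : α → α → ℤ} (hfg : IsMobiusInversion f g) {c e : α}
    (hce : c ≤ e) : f c e = ∑ b with b ≤ e, ∑ a with a ≤ b ∧ a ≤ c, g a b := by
  rw [hfg c e hce, Finset.sum_comm]
  simp only [Finset.sum_filter]
  refine Finset.sum_congr rfl fun b _ => ?_
  split_ifs with hb <;> simp [hb]

end MobiusInversion

section MobiusInversionSquare

variable {α : Type*} [SemilatticeInf α] [Fintype α] [DecidableLE α] {f g : α → α → ℤ} {a b c x : α}

theorem IsMobiusInversion.eq_zero_of_birth (hfg : IsMobiusInversion f g)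
    (hsq : IsUnitSquare a b c x)
    (hf : ∀ e, x ≤ e → f x e - f b e - f c e + f a e = 0) : ∀ y, x ≤ y → g x y = 0 := by
  refine eq_zero_of_forall_sum_le_eq_zero fun e he => ?_
  rw [← hf e he, hfg.eq_sum_birth he, hfg.eq_sum_birth (hsq.left_covBy_top.le.trans he),
    hfg.eq_sum_birth (hsq.right_covBy_top.le.trans he),
    hfg.eq_sum_birth (hsq.bot_lt_top.le.trans he),
    hsq.sum_sub_sum_sub_sum_add_sum fun w => ∑ y with w ≤ y ∧ y ≤ e, g w y]

theorem IsMobiusInversion.eq_zero_of_death (hfg : IsMobiusInversion f g)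
    (hsq : IsUnitSquare a b c x)
    (hf : ∀ w, w ≤ x → f w x - f (w ⊓ b) b - f (w ⊓ c) c + f (w ⊓ a) a = 0) :
    ∀ w, w ≤ x → g w x = 0 := by
  have hsum (w z) : f (w ⊓ z) z = ∑ y with y ≤ z, ∑ u with u ≤ y ∧ u ≤ w, g u y := by
    rw [hfg.eq_sum_death inf_le_right]
    refine Finset.sum_congr rfl fun y hy => Finset.sum_congr ?_ fun _ _ => rfl
    rw [Finset.mem_filter_univ] at hy
    ext u
    simp only [Finset.mem_filter_univ, le_inf_iff]
    exact ⟨fun hu => ⟨hu.1, hu.2.1⟩, fun hu => ⟨hu.1, hu.2, hu.1.trans hy⟩⟩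
  refine eq_zero_of_forall_sum_le_eq_zero (φ := (g · x)) fun w hw => ?_
  rw [← hf w hw, hsum, hsum, hsum, ← inf_eq_left.2 hw, hsum, inf_eq_left.2 hw,
    hsq.sum_sub_sum_sub_sum_add_sum fun y => ∑ u with u ≤ y ∧ u ≤ w, g u y]

end MobiusInversionSquare

section Chains

omit [Fintype V]

variable {d : ℕ} {K L : Finset (Finset V)} {s : Finset V}

omit [DecidableEq V] in
theorem chainsOf_eq_supported (d : ℕ) (L : Finset (Finset V)) :
    chainsOf d L = Finsupp.supported (ZMod 2) (ZMod 2) {s : Finset V | s ∈ L ∧ s.card = d + 1} :=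
  (Finsupp.supported_eq_span_single _ _).symm

omit [DecidableEq V] in
theorem chainsOf_mono (h : K ⊆ L) : chainsOf d K ≤ chainsOf d L := by
  simp only [chainsOf_eq_supported]
  exact Finsupp.supported_mono fun s hs => ⟨h hs.1, hs.2⟩

theorem chainsOf_inter : chainsOf d (K ∩ L) = chainsOf d K ⊓ chainsOf d L := by
  simp only [chainsOf_eq_supported, ← Finsupp.supported_inter]
  congr 1
  ext s
  simp only [Finset.mem_inter, Set.mem_inter_iff, Set.mem_ofPred_eq]
  tauto

theorem chainsOf_inf_ker_lapply_le (h : L ⊆ insert s K) :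
    chainsOf d L ⊓ LinearMap.ker (Finsupp.lapply s) ≤ chainsOf d K := by
  rintro z ⟨hz, hzs⟩
  rw [SetLike.mem_coe, chainsOf_eq_supported, Finsupp.mem_supported'] at hz
  rw [chainsOf_eq_supported, Finsupp.mem_supported']
  intro t ht
  by_cases hts : t = s
  · exact hts ▸ hzs
  · exact hz t fun ht' => ht ⟨Finset.mem_of_mem_insert_of_ne (h ht'.1) hts, ht'.2⟩

theorem chainsOf_le_of_subset_insert_of_card_ne (h : L ⊆ insert s K) (hs : s.card ≠ d + 1) :
    chainsOf d L ≤ chainsOf d K := by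
  simp only [chainsOf_eq_supported]
  refine Finsupp.supported_mono fun t ht => ⟨?_, ht.2⟩
  exact Finset.mem_of_mem_insert_of_ne (h ht.1) fun hts => hs (hts ▸ ht.2)

theorem cyclesOf_mono (h : K ⊆ L) : cyclesOf d K ≤ cyclesOf d L :=
  inf_le_inf_right _ (chainsOf_mono h)

instance finiteDimensional_cyclesOf : FiniteDimensional (ZMod 2) (cyclesOf d L) :=
  have : FiniteDimensional (ZMod 2) (chainsOf d L) :=
    FiniteDimensional.span_of_finite _ ((L.finite_toSet.subset fun _ hs => hs.1).image _)
  Submodule.finiteDimensional_of_le inf_le_left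

theorem boundariesOf_mono (h : K ⊆ L) : boundariesOf d K ≤ boundariesOf d L :=
  Submodule.map_mono (chainsOf_mono h)

theorem boundariesOf_le_chainsOf (hL : IsComplex L) : boundariesOf d L ≤ chainsOf d L := by
  rw [boundariesOf, chainsOf, Submodule.map_span_le]
  rintro _ ⟨s, ⟨hs, hcard⟩, rfl⟩
  simp only [bdry, Finsupp.lsum_single, LinearMap.toSpanSingleton_apply, one_smul]
  refine Submodule.sum_mem _ fun v hv => Submodule.subset_span ⟨s.erase v, ?_, rfl⟩
  have hcard_erase : (s.erase v).card = d + 1 := by rw [Finset.card_erase_of_mem hv, hcard]; rfl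
  refine ⟨(hL s hs).2 _ (s.erase_subset v) ?_, hcard_erase⟩
  exact (Finset.card_pos.1 (hcard_erase ▸ d.succ_pos)).ne_empty

-- If `s` has dimension `d`, then no `(d + 1)`-simplex is new; otherwise no `d`-simplex is.
theorem boundariesOf_le_chainsOf_of_subset_insert (hK : IsComplex K) (hL : IsComplex L)
    (h : L ⊆ insert s K) : boundariesOf d L ≤ chainsOf d K := by
  by_cases hs : s.card = d + 1
  · have hchains : chainsOf (d + 1) L ≤ chainsOf (d + 1) K :=
      chainsOf_le_of_subset_insert_of_card_ne h (by lia)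
    exact (Submodule.map_mono hchains).trans (boundariesOf_le_chainsOf hK)
  · exact (boundariesOf_le_chainsOf hL).trans (chainsOf_le_of_subset_insert_of_card_ne h hs)

theorem finrank_cyclesOf_inf_le_add_one (h : L ⊆ insert s K) (S : Submodule (ZMod 2) (Chn V)) :
    Module.finrank (ZMod 2) ↥(cyclesOf d L ⊓ S) ≤
      Module.finrank (ZMod 2) ↥(cyclesOf d K ⊓ S) + 1 := by
  refine (finrank_le_finrank_inf_ker_add_one _ (Finsupp.lapply s)).trans ?_
  gcongr
  refine Submodule.finrank_mono fun z hz => ?_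
  obtain ⟨⟨⟨hzL, hzker⟩, hzS⟩, hzs⟩ := hz
  exact ⟨⟨chainsOf_inf_ker_lapply_le h ⟨hzL, hzs⟩, hzker⟩, hzS⟩

end Chains

section Grid

/-- The grid `L_n`. -/
abbrev Grid (n : ℕ) : Type := Fin (n + 1) × Fin (n + 1)

/-- The height of a grade above `(0, 0)`, which is also the time at which a path visits it. -/
def gridRank {n : ℕ} (a : Grid n) : ℕ := a.1 + a.2

variable {n : ℕ} {a b x : Grid n}

theorem gridRank_mono : Monotone (gridRank (n := n)) :=
  fun _ _ h => Nat.add_le_add h.1 h.2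

theorem gridRank_eq_iff : gridRank a = 2 * n ↔ a = ⊤ := by
  simp only [gridRank, Prod.ext_iff, Fin.ext_iff, Prod.fst_top, Prod.snd_top, Fin.top_eq_last,
    Fin.val_last]
  lia

theorem gridRank_le (a : Grid n) : gridRank a ≤ 2 * n :=
  (gridRank_mono le_top).trans_eq (gridRank_eq_iff.2 rfl)

theorem gridRank_of_covBy (h : a ⋖ b) : gridRank b = gridRank a + 1 := by
  rw [Prod.covBy_iff] at h
  simp only [Fin.covBy_iff, Nat.covBy_iff_add_one_eq, Fin.ext_iff] at h
  simp only [gridRank]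
  lia

theorem covBy_of_le_of_gridRank_eq (hle : a ≤ b) (h : gridRank b = gridRank a + 1) : a ⋖ b := by
  have h₁ : (a.1 : ℕ) ≤ b.1 := hle.1
  have h₂ : (a.2 : ℕ) ≤ b.2 := hle.2
  rw [Prod.covBy_iff]
  simp only [Fin.covBy_iff, Nat.covBy_iff_add_one_eq, Fin.ext_iff]
  simp only [gridRank] at h
  lia

theorem isUnitSquare_of_val_add_one_eq (h₁ : (a.1 : ℕ) + 1 = x.1) (h₂ : (a.2 : ℕ) + 1 = x.2) :
    IsUnitSquare a (x.1, a.2) (a.1, x.2) x := by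
  have hcov₁ : a.1 ⋖ x.1 := Fin.covBy_iff.2 (Nat.covBy_iff_add_one_eq.2 h₁)
  have hcov₂ : a.2 ⋖ x.2 := Fin.covBy_iff.2 (Nat.covBy_iff_add_one_eq.2 h₂)
  refine ⟨Prod.ext (inf_eq_right.2 hcov₁.le) (inf_eq_left.2 hcov₂.le),
    Prod.mk_covBy_mk_iff_left.2 hcov₁, Prod.mk_covBy_mk_iff_right.2 hcov₂,
    Prod.mk_covBy_mk_iff_right.2 hcov₂, Prod.mk_covBy_mk_iff_left.2 hcov₁, fun w hw => ?_⟩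
  rcases Prod.lt_iff.1 hw with ⟨hw₁, hw₂⟩ | ⟨hw₁, hw₂⟩
  · exact .inr ⟨hcov₁.le_of_lt hw₁, hw₂⟩
  · exact .inl ⟨hw₁, hcov₂.le_of_lt hw₂⟩

end Grid

section NonDegenerate

theorem eq_of_covBy_of_not_le {α : Type*} [LinearOrder α] {a b y : α} (hab : a ⋖ b) (hyb : y ≤ b)
    (hya : ¬ y ≤ a) : y = b :=
  hyb.antisymm (hab.ge_of_gt (not_le.1 hya))

theorem fst_eq_or_snd_eq_of_covBy {α β : Type*} [LinearOrder α] [LinearOrder β] {a b y z : α × β}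
    (hab : a ⋖ b) (hy : y ≤ b) (hya : ¬ y ≤ a) (hz : z ≤ b) (hza : ¬ z ≤ a) :
    y.1 = z.1 ∨ y.2 = z.2 := by
  rcases Prod.covBy_iff.1 hab with ⟨hcov, heq⟩ | ⟨hcov, heq⟩
  · have key {w : α × β} (hw : w ≤ b) (hwa : ¬ w ≤ a) : w.1 = b.1 :=
      eq_of_covBy_of_not_le hcov hw.1 fun h => hwa ⟨h, hw.2.trans_eq heq.symm⟩
    exact .inl ((key hy hya).trans (key hz hza).symm)
  · have key {w : α × β} (hw : w ≤ b) (hwa : ¬ w ≤ a) : w.2 = b.2 :=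
      eq_of_covBy_of_not_le hcov hw.2 fun h => hwa ⟨hw.1.trans_eq heq.symm, h⟩
    exact .inr ((key hy hya).trans (key hz hza).symm)

omit [DecidableEq V] [Fintype V]

variable {n : ℕ} {F : Grid n → Finset (Finset V)} {a b c w x : Grid n} {s t : Finset V}

theorem exists_lowerCorner_le (h : s ∈ F w) : ∃ a ≤ w, LowerCorner F s a := by
  obtain ⟨a, haw, ha⟩ := (Set.toFinite {a | s ∈ F a}).exists_le_minimal h
  exact ⟨a, haw, ha.1, fun b hb hsb => hb.not_ge (ha.2 hsb hb.le)⟩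

-- Lower corners of `s` and `t` below `b` but not below `a` share the coordinate in which `a` and
-- `b` differ.
theorem NonDeg.eq_of_covBy (hnd : NonDeg F) (hmono : Monotone F) (hab : a ⋖ b) (hwb : w ≤ b)
    (hsw : s ∈ F w) (hsa : s ∉ F (w ⊓ a)) (htb : t ∈ F b) (hta : t ∉ F a) : s = t := by
  obtain ⟨y, hyw, hy⟩ := exists_lowerCorner_le hsw
  obtain ⟨z, hzb, hz⟩ := exists_lowerCorner_le htb
  have hya : ¬ y ≤ a := fun h => hsa (hmono (le_inf hyw h) hy.1)
  have hza : ¬ z ≤ a := fun h => hta (hmono h hz.1)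
  by_contra hst
  have hne := hnd s t y z hy hz (.inl hst)
  exact (fst_eq_or_snd_eq_of_covBy hab (hyw.trans hwb) hya hzb hza).elim hne.1 hne.2

theorem NonDeg.eq_of_notMem (hnd : NonDeg F) (hmono : Monotone F) (hab : a ⋖ b)
    (hsb : s ∈ F b) (hsa : s ∉ F a) (htb : t ∈ F b) (hta : t ∉ F a) : s = t :=
  hnd.eq_of_covBy hmono hab le_rfl hsb (by rwa [inf_eq_right.2 hab.le]) htb hta

theorem NonDeg.mem_and_mem_or_mem_and_mem (hnd : NonDeg F) (hmono : Monotone F)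
    (hsq : IsUnitSquare a b c x) (hst : s ≠ t) (hsx : s ∈ F x) (hsa : s ∉ F a) (htx : t ∈ F x)
    (hta : t ∉ F a) : (s ∈ F b ∧ t ∈ F c) ∨ (s ∈ F c ∧ t ∈ F b) := by
  have hcross {u v : Finset V} (huv : u ≠ v) (hua : u ∉ F a) (hvx : v ∈ F x) (hub : u ∈ F b) :
      v ∈ F c := by
    by_contra hvc
    exact huv (hnd.eq_of_covBy hmono hsq.right_covBy_top hsq.left_covBy_top.le hub
      (by rwa [hsq.inf_eq]) hvx hvc)
  by_cases hsb : s ∈ F b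
  · exact .inl ⟨hsb, hcross hst hsa htx hsb⟩
  · have htb : t ∈ F b := by
      by_contra htb
      exact hst (hnd.eq_of_notMem hmono hsq.left_covBy_top hsx hsb htx htb)
    exact .inr ⟨hcross hst.symm hta hsx htb, htb⟩

end NonDegenerate

section ElementarySteps

omit [Fintype V]

variable {n : ℕ} {F : Grid n → Finset (Finset V)} {a b w : Grid n} {s : Finset V}

theorem NonDeg.exists_subset_insert (hnd : NonDeg F) (hmono : Monotone F) (hab : a ⋖ b) :
    ∃ s, F b ⊆ insert s (F a) := by
  by_cases h : F b ⊆ F a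
  · exact ⟨∅, h.trans (Finset.subset_insert _ _)⟩
  · obtain ⟨s, hsb, hsa⟩ := Finset.not_subset.1 h
    refine ⟨s, fun t htb => Finset.mem_insert.2 (or_iff_not_imp_right.2 fun hta => ?_)⟩
    exact hnd.eq_of_notMem hmono hab htb hta hsb hsa

theorem NonDeg.inter_subset_inf (hnd : NonDeg F) (hmono : Monotone F) (hab : a ⋖ b)
    (hsb : s ∈ F b) (hsa : s ∉ F a) (hwb : w ≤ b) : F w ∩ F a ⊆ F (w ⊓ a) := by
  intro t ht
  rw [Finset.mem_inter] at ht
  by_contra hta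
  exact hsa (hnd.eq_of_covBy hmono hab hwb ht.1 hta hsb hsa ▸ ht.2)

end ElementarySteps
section Paths

variable {n : ℕ}

/-- The largest first coordinate that a path through all the grades in `T` can have at time `k`: the
first coordinate is at most `w.1` until the path visits `w`, and the second is at least `w.2` from
then on. The path attaining this bound at all times passes through `T` when `T` is a chain. -/
def staircaseFst (T : Finset (Grid n)) (hT : T.Nonempty) (k : ℕ) : ℕ :=
  T.inf' hT fun w => max (w.1 : ℕ) (k - w.2)

variable {T : Finset (Grid n)} {hT : T.Nonempty} {k : ℕ}

theorem staircaseFst_mono : Monotone (staircaseFst T hT) :=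
  fun _ _ h => Finset.inf'_mono_fun fun _ _ => max_le_max_left _ (Nat.sub_le_sub_right h _)

theorem staircaseFst_succ_le : staircaseFst T hT (k + 1) ≤ staircaseFst T hT k + 1 := by
  obtain ⟨w, hw, hk⟩ := T.exists_mem_eq_inf' hT fun w => max (w.1 : ℕ) (k - w.2)
  refine (Finset.inf'_le _ hw).trans ?_
  rw [staircaseFst, hk]
  lia

theorem staircaseFst_gridRank (hchain : IsChain (· ≤ ·) (T : Set (Grid n))) {e : Grid n}
    (he : e ∈ T) : staircaseFst T hT (gridRank e) = e.1 := by
  apply le_antisymm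
  · exact (Finset.inf'_le _ he).trans (by simp [gridRank])
  · refine Finset.le_inf' _ _ fun w hw => ?_
    rcases hchain.total he hw with h | h
    · exact le_max_of_le_left h.1
    · have hsnd : (w.2 : ℕ) ≤ e.2 := h.2
      exact le_max_of_le_right (by simp only [gridRank]; lia)

theorem staircaseFst_le_self (hbot : ⊥ ∈ T) : staircaseFst T hT k ≤ k :=
  (Finset.inf'_le _ hbot).trans (by simp [bot_eq_zero])

theorem staircaseFst_le (htop : ⊤ ∈ T) (hk : k ≤ 2 * n) : staircaseFst T hT k ≤ n :=
  (Finset.inf'_le _ htop).trans (by simp [Fin.top_eq_last]; lia)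

theorem le_staircaseFst_add : k ≤ staircaseFst T hT k + n := by
  rw [← Nat.sub_le_iff_le_add]
  exact Finset.le_inf' _ _ fun w _ => le_max_of_le_right (by lia)

theorem exists_isPath_through (hchain : IsChain (· ≤ ·) (T : Set (Grid n))) :
    ∃ p, IsPath n p ∧ ∀ e ∈ T, p (gridRank e) = e := by
  have hends : IsChain (· ≤ ·) ((insert ⊥ (insert ⊤ T) : Finset (Grid n)) : Set (Grid n)) := by
    push_cast
    exact (hchain.insert fun _ _ _ => .inr le_top).insert fun _ _ _ => .inl bot_le
  let f := staircaseFst _ (Finset.insert_nonempty ⊥ (insert ⊤ T))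
  let p (k : ℕ) : Grid n := (⟨min (f k) n, by lia⟩, ⟨min (k - f k) n, by lia⟩)
  have hf (k : ℕ) (hk : k ≤ 2 * n) : f k ≤ k ∧ f k ≤ n ∧ k ≤ f k + n :=
    ⟨staircaseFst_le_self (by simp), staircaseFst_le (by simp) hk, le_staircaseFst_add⟩
  have hp {e : Grid n} (he : e ∈ insert ⊥ (insert ⊤ T)) : p (gridRank e) = e := by
    have := staircaseFst_gridRank (hT := Finset.insert_nonempty _ _) hends he
    simp only [p, f, this]
    simp only [gridRank, Prod.ext_iff, Fin.ext_iff]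
    lia
  refine ⟨p, ⟨hp (e := ⊥) (by simp), ?_, fun k hk => ?_⟩, fun e he => hp (by simp [he])⟩
  · exact gridRank_eq_iff.2 (rfl : (⊤ : Grid n) = ⊤) ▸ hp (e := ⊤) (by simp)
  · have h₀ := hf k hk.le
    have h₁ := hf (k + 1) hk
    have hmono : f k ≤ f (k + 1) := staircaseFst_mono k.le_succ
    have hsucc : f (k + 1) ≤ f k + 1 := staircaseFst_succ_le
    simp only [p, Prod.mk_le_mk, Fin.mk_le_mk]
    lia

variable {p : ℕ → Grid n}

theorem IsPath.gridRank_apply (hp : IsPath n p) (hk : k ≤ 2 * n) : gridRank (p k) = k := by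
  induction k with
  | zero => simp [hp.1, gridRank]
  | succ k ih => exact (hp.2.2 k hk).2.trans (congrArg (· + 1) (ih (by lia)))

theorem IsPath.covBy (hp : IsPath n p) (hk : k < 2 * n) : p k ⋖ p (k + 1) :=
  covBy_of_le_of_gridRank_eq (hp.2.2 k hk).1 (hp.2.2 k hk).2

theorem IsPath.apply_eq_top_iff (hp : IsPath n p) (hk : k ≤ 2 * n) : p k = ⊤ ↔ k = 2 * n := by
  rw [← gridRank_eq_iff, hp.gridRank_apply hk]

theorem IsPath.update (hp : IsPath n p) (hk : k + 2 ≤ 2 * n) {c : Grid n} (hc : p k ⋖ c)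
    (hc' : c ⋖ p (k + 2)) : IsPath n (Function.update p (k + 1) c) := by
  refine ⟨?_, ?_, fun m hm => ?_⟩
  · rw [Function.update_of_ne (by lia), hp.1]
  · rw [Function.update_of_ne (by lia), hp.2.1]
  · obtain rfl | hmk := eq_or_ne m k
    · rw [Function.update_of_ne (by lia), Function.update_self]
      exact ⟨hc.le, gridRank_of_covBy hc⟩
    obtain rfl | hmk' := eq_or_ne m (k + 1)
    · rw [Function.update_self, Function.update_of_ne (by lia)]
      exact ⟨hc'.le, gridRank_of_covBy hc'⟩
    · rw [Function.update_of_ne hmk', Function.update_of_ne (by lia)]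
      exact hp.2.2 m hm

variable {a b c x : Grid n}

/-- The paths `p` and `q` both pass through `a` at time `k` and through `x` at time `k + 2`, and
differ at most in the intermediate step. -/
structure IsPathPair (a x : Grid n) (p q : ℕ → Grid n) (k : ℕ) : Prop where
  isPath_left : IsPath n p
  isPath_right : IsPath n q
  add_two_le : k + 2 ≤ 2 * n
  left_apply : p k = a
  left_apply_add_two : p (k + 2) = x
  right_apply : q k = a
  right_apply_add_two : q (k + 2) = x
  apply_eq : ∀ m, m ≠ k + 1 → p m = q m

theorem IsPath.isPathPair_update (hp : IsPath n p) (hk : k + 2 ≤ 2 * n) (hc : p k ⋖ c)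
    (hc' : c ⋖ p (k + 2)) : IsPathPair (p k) (p (k + 2)) p (Function.update p (k + 1) c) k where
  isPath_left := hp
  isPath_right := hp.update hk hc hc'
  add_two_le := hk
  left_apply := rfl
  left_apply_add_two := rfl
  right_apply := Function.update_of_ne (by lia) _ _
  right_apply_add_two := Function.update_of_ne (by lia) _ _
  apply_eq _ hm := (Function.update_of_ne hm _ _).symm

theorem IsUnitSquare.exists_isPathPair (hsq : IsUnitSquare a b c x)
    (hchain : IsChain (· ≤ ·) (T : Set (Grid n))) (hT : ∀ e ∈ T, e ≤ a ∨ x ≤ e) :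
    ∃ p q k, IsPathPair a x p q k ∧ p (k + 1) = b ∧ q (k + 1) = c ∧
      ∀ e ∈ T, p (gridRank e) = e ∧ q (gridRank e) = e := by
  have hrank_b := gridRank_of_covBy hsq.bot_covBy_left
  have hrank_x : gridRank x = gridRank a + 2 := by
    rw [gridRank_of_covBy hsq.left_covBy_top, hrank_b]
  have hsquare : IsChain (· ≤ ·)
      ((insert a (insert b (insert x T)) : Finset (Grid n)) : Set (Grid n)) := by
    have hab := hsq.bot_covBy_left.le
    have hbx := hsq.left_covBy_top.le
    push_cast
    refine ((hchain.insert fun e he _ => ?_).insert fun e he _ => ?_).insert fun e he _ => ?_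
    all_goals grind
  obtain ⟨p, hp, hpT⟩ := exists_isPath_through hsquare
  have hpa : p (gridRank a) = a := hpT a (by simp)
  have hpb : p (gridRank a + 1) = b := hrank_b ▸ hpT b (by simp)
  have hpx : p (gridRank a + 2) = x := hrank_x ▸ hpT x (by simp)
  have hpair := hp.isPathPair_update (hrank_x ▸ gridRank_le x) (hpa ▸ hsq.bot_covBy_right)
    (hpx ▸ hsq.right_covBy_top)
  rw [hpa, hpx] at hpair
  refine ⟨p, _, gridRank a, hpair, hpb, Function.update_self .., fun e he => ?_⟩
  have hpe : p (gridRank e) = e := hpT e (by simp [he])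
  have hne : gridRank e ≠ gridRank a + 1 := by
    rcases hT e he with h | h <;> have := gridRank_mono h <;> lia
  exact ⟨hpe, hpair.apply_eq _ hne ▸ hpe⟩

end Paths
section BirthDeath

omit [Fintype V]

/-- The chains that count as dead at the grade `e`: the boundaries of `F e`, except that every chain
is dead at the top grade. This is the convention built into `ZBFin2`. -/
def deadChains (d n : ℕ) (F : Grid n → Finset (Finset V)) (e : Grid n) :
    Submodule (ZMod 2) (Chn V) :=
  if e = ⊤ then ⊤ else boundariesOf d (F e)

/-- The value `abef` of the 1-dimensional persistence diagram along a path with steps `a ⋖ b` and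
`e ⋖ f`. It is `1` if the simplices added at these steps are paired and `0` otherwise. -/
def pairingNumber (d n : ℕ) (F : Grid n → Finset (Finset V)) (a b e f : Grid n) : ℤ :=
  ZBFin2 d n F b f - ZBFin2 d n F b e - ZBFin2 d n F a f + ZBFin2 d n F a e

variable {d n : ℕ} {F : Grid n → Finset (Finset V)} {a b e f u v w : Grid n} {s : Finset V}

theorem ZBFin2_eq_finrank (v e : Grid n) :
    ZBFin2 d n F v e = Module.finrank (ZMod 2) ↥(cyclesOf d (F v) ⊓ deadChains d n F e) := by
  have htop : (Fin.last n, Fin.last n) = (⊤ : Grid n) := rfl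
  rw [ZBFin2, deadChains, htop]
  by_cases he : e = ⊤
  · rw [if_pos he, if_pos he, inf_top_eq]
  · rw [if_neg he, if_neg he]

theorem deadChains_mono (hmono : Monotone F) : Monotone (deadChains d n F) := by
  intro e f hef
  rw [deadChains, deadChains]
  split_ifs with he hf
  · exact le_rfl
  · exact absurd (top_le_iff.1 (he ▸ hef)) hf
  · exact le_top
  · exact boundariesOf_mono (hmono hef)

theorem ZBFin2_bot (hbot : F ⊥ = ∅) (e : Grid n) : ZBFin2 d n F ⊥ e = 0 := by
  have hcycles : cyclesOf d (F ⊥) = ⊥ := by simp [hbot, cyclesOf, chainsOf]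
  rw [ZBFin2_eq_finrank, hcycles, bot_inf_eq, finrank_bot, Nat.cast_zero]

theorem ZBFin2_congr (huv : F u ⊆ F v)
    (h : cyclesOf d (F v) ⊓ deadChains d n F e ≤ chainsOf d (F u)) :
    ZBFin2 d n F v e = ZBFin2 d n F u e := by
  have hinf : cyclesOf d (F v) ⊓ deadChains d n F e = cyclesOf d (F u) ⊓ deadChains d n F e :=
    le_antisymm (le_inf (le_inf h (inf_le_left.trans inf_le_right)) inf_le_right)
      (inf_le_inf_right _ (cyclesOf_mono huv))
  rw [ZBFin2_eq_finrank, ZBFin2_eq_finrank, hinf]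

theorem ZBFin2_eq_self (hmono : Monotone F) (hcx : ∀ a, IsComplex (F a)) (he : e ≠ ⊤)
    (hev : e ≤ v) : ZBFin2 d n F v e = ZBFin2 d n F e e := by
  refine ZBFin2_congr (hmono hev) (inf_le_right.trans ?_)
  rw [deadChains, if_neg he]
  exact boundariesOf_le_chainsOf (hcx e)

theorem ZBFin2_self_of_covBy (hmono : Monotone F) (hcx : ∀ a, IsComplex (F a)) (hnd : NonDeg F)
    (huv : u ⋖ v) (hv : v ≠ ⊤) : ZBFin2 d n F v v = ZBFin2 d n F u v := by
  obtain ⟨s, hs⟩ := hnd.exists_subset_insert hmono huv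
  refine ZBFin2_congr (hmono huv.le) (inf_le_right.trans ?_)
  rw [deadChains, if_neg hv]
  exact boundariesOf_le_chainsOf_of_subset_insert (hcx u) (hcx v) hs

-- Equality of the ranks at `a` and `b` means that no dead cycle of `F b` involves `s`.
theorem ZBFin2_inf_of_covBy (hmono : Monotone F) (hnd : NonDeg F) (hab : a ⋖ b) (hsb : s ∈ F b)
    (hsa : s ∉ F a) (h : ZBFin2 d n F b e = ZBFin2 d n F a e) (hwb : w ≤ b) :
    ZBFin2 d n F w e = ZBFin2 d n F (w ⊓ a) e := by
  have hdead : cyclesOf d (F b) ⊓ deadChains d n F e ≤ chainsOf d (F a) := by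
    rw [ZBFin2_eq_finrank, ZBFin2_eq_finrank, Nat.cast_inj] at h
    have hinf := Submodule.eq_of_le_of_finrank_eq
      (inf_le_inf_right (deadChains d n F e) (cyclesOf_mono (hmono hab.le))) h.symm
    exact hinf.ge.trans (inf_le_left.trans inf_le_left)
  refine ZBFin2_congr (hmono inf_le_left) ?_
  calc cyclesOf d (F w) ⊓ deadChains d n F e
      ≤ chainsOf d (F w) ⊓ chainsOf d (F a) :=
        le_inf (inf_le_left.trans inf_le_left)
          ((inf_le_inf_right _ (cyclesOf_mono (hmono hwb))).trans hdead)
    _ = chainsOf d (F w ∩ F a) := chainsOf_inter.symm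
    _ ≤ chainsOf d (F (w ⊓ a)) := chainsOf_mono (hnd.inter_subset_inf hmono hab hsb hsa hwb)

theorem pairingNumber_eq_zero_or_one (hmono : Monotone F) (hnd : NonDeg F) (hab : a ⋖ b)
    (hef : e ≤ f) : pairingNumber d n F a b e f = 0 ∨ pairingNumber d n F a b e f = 1 := by
  obtain ⟨s, hs⟩ := hnd.exists_subset_insert hmono hab
  have hcycles : cyclesOf d (F a) ≤ cyclesOf d (F b) := cyclesOf_mono (hmono hab.le)
  have hdead : deadChains d n F e ≤ deadChains d n F f := deadChains_mono hmono hef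
  have hnonneg := finrank_inf_add_finrank_inf_le hcycles hdead
  have hstep := finrank_cyclesOf_inf_le_add_one (d := d) hs (deadChains d n F f)
  have hbirths := Submodule.finrank_mono (inf_le_inf_right (deadChains d n F e) hcycles)
  simp only [pairingNumber, ZBFin2_eq_finrank]
  lia

end BirthDeath

section Pairing

omit [Fintype V]

variable {d n : ℕ} {F : Grid n → Finset (Finset V)} {p q : ℕ → Grid n} {i j k l : ℕ}

theorem ZB1_comp_path (hp : IsPath n p) (hj : j ≤ 2 * n) :
    ZB1 d (2 * n) (F ∘ p) i j = ZBFin2 d n F (p i) (p j) := by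
  have htop : (Fin.last n, Fin.last n) = (⊤ : Grid n) := rfl
  simp only [ZB1, ZBFin2, htop, hp.apply_eq_top_iff hj, Function.comp_apply]

theorem pairedAt_comp_path_iff (hp : IsPath n p) (hl : l < 2 * n) :
    PairedAt d (2 * n) (F ∘ p) k l ↔
      pairingNumber d n F (p k) (p (k + 1)) (p l) (p (l + 1)) ≠ 0 := by
  have hl' : l + 1 ≤ 2 * n := hl
  simp only [PairedAt, pairingNumber, ZB1_comp_path hp hl.le, ZB1_comp_path hp hl']

theorem pairingNumber_eq_of_pairedAt_iff (hmono : Monotone F) (hnd : NonDeg F)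
    (hp : IsPath n p) (hq : IsPath n q) (hi : i < 2 * n) (hj : j < 2 * n) (hk : k < 2 * n)
    (hl : l < 2 * n)
    (h : PairedAt d (2 * n) (F ∘ p) i j ↔ PairedAt d (2 * n) (F ∘ q) k l) :
    pairingNumber d n F (p i) (p (i + 1)) (p j) (p (j + 1)) =
      pairingNumber d n F (q k) (q (k + 1)) (q l) (q (l + 1)) := by
  rw [pairedAt_comp_path_iff hp hj, pairedAt_comp_path_iff hq hl] at h
  have hp01 := pairingNumber_eq_zero_or_one (d := d) hmono hnd (hp.covBy hi) (hp.covBy hj).le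
  have hq01 := pairingNumber_eq_zero_or_one (d := d) hmono hnd (hq.covBy hk) (hq.covBy hl).le
  lia

/-- Along any two paths that pass through `a` and `x` and differ only in the intermediate step, the
simplex `σ` is paired with the same steps, both as a birth and as a death. -/
def NoSwitch (d : ℕ) (F : Grid n → Finset (Finset V)) (σ : Finset V) (a x : Grid n) : Prop :=
  ∀ p q k, IsPathPair a x p q k → ∀ m,
    (PairedAt d (2 * n) (F ∘ p) (stepOf F p σ k) m ↔
      PairedAt d (2 * n) (F ∘ q) (stepOf F q σ k) m) ∧
    (PairedAt d (2 * n) (F ∘ p) m (stepOf F p σ k) ↔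
      PairedAt d (2 * n) (F ∘ q) m (stepOf F q σ k))

variable {a b c x : Grid n} {σ : Finset V}

theorem NoSwitch.pairingNumber_eq (h : NoSwitch d F σ a x) (hmono : Monotone F) (hnd : NonDeg F)
    (hpair : IsPathPair a x p q k) (hp : σ ∈ F (p (k + 1))) (hq : σ ∉ F (q (k + 1))) {m : ℕ}
    (hm : m < 2 * n) :
    pairingNumber d n F a (p (k + 1)) (p m) (p (m + 1)) =
        pairingNumber d n F (q (k + 1)) x (q m) (q (m + 1)) ∧
      pairingNumber d n F (p m) (p (m + 1)) a (p (k + 1)) =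
        pairingNumber d n F (q m) (q (m + 1)) (q (k + 1)) x := by
  have hiff := h p q k hpair m
  simp only [stepOf, if_pos hp, if_neg hq] at hiff
  have hk := hpair.add_two_le
  have hleft := hpair.isPath_left
  have hright := hpair.isPath_right
  rw [← hpair.right_apply_add_two, ← hpair.left_apply]
  exact ⟨pairingNumber_eq_of_pairedAt_iff hmono hnd hleft hright (by lia) hm hk hm hiff.1,
    pairingNumber_eq_of_pairedAt_iff hmono hnd hleft hright hm (by lia) hm hk hiff.2⟩

theorem NoSwitch.pairingNumber_eq_of_covBy (h : NoSwitch d F σ a x) (hmono : Monotone F)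
    (hnd : NonDeg F) (hsq : IsUnitSquare a b c x) (hσb : σ ∈ F b) (hσc : σ ∉ F c) {e f : Grid n}
    (hef : e ⋖ f) (hside : f ≤ a ∨ x ≤ e) :
    pairingNumber d n F a b e f = pairingNumber d n F c x e f ∧
      pairingNumber d n F e f a b = pairingNumber d n F e f c x := by
  have hchain : IsChain (· ≤ ·) (({e, f} : Finset (Grid n)) : Set (Grid n)) := by
    push_cast
    exact IsChain.pair hef.le
  have hsides : ∀ y ∈ ({e, f} : Finset (Grid n)), y ≤ a ∨ x ≤ y := by
    simp only [Finset.mem_insert, Finset.mem_singleton, forall_eq_or_imp, forall_eq]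
    exact ⟨hside.imp_left hef.le.trans, hside.imp_right (·.trans hef.le)⟩
  obtain ⟨p, q, k, hpair, rfl, rfl, hpq⟩ := hsq.exists_isPathPair hchain hsides
  have hm : gridRank e < 2 * n :=
    (Nat.lt_of_succ_le (gridRank_of_covBy hef).ge).trans_le (gridRank_le f)
  have heq := h.pairingNumber_eq hmono hnd hpair hσb hσc hm
  rwa [← gridRank_of_covBy hef, (hpq e (by simp)).1, (hpq e (by simp)).2, (hpq f (by simp)).1,
    (hpq f (by simp)).2] at heq

theorem NoSwitch.pairingNumber_eq_of_isUnitSquare (h : NoSwitch d F σ a x) (hmono : Monotone F)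
    (hnd : NonDeg F) (hsq : IsUnitSquare a b c x) (hσb : σ ∈ F b) (hσc : σ ∉ F c) :
    pairingNumber d n F a c c x = pairingNumber d n F a b a b ∧
      pairingNumber d n F a b b x = pairingNumber d n F c x c x ∧
      pairingNumber d n F c x c x = pairingNumber d n F b x a b := by
  obtain ⟨p, q, k, hpair, rfl, rfl, -⟩ :=
    hsq.exists_isPathPair (T := ∅) (by simp [IsChain]) (by simp)
  have hk := hpair.add_two_le
  have hlower := h.pairingNumber_eq hmono hnd hpair hσb hσc (m := k) (by lia)
  have hupper := h.pairingNumber_eq hmono hnd hpair hσb hσc (m := k + 1) (by lia)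
  rw [hpair.left_apply, hpair.right_apply] at hlower
  rw [hpair.left_apply_add_two, hpair.right_apply_add_two] at hupper
  exact ⟨hlower.2.symm, hupper.1, hupper.2.symm⟩

end Pairing
section Vanishing

omit [Fintype V]

variable {d n : ℕ} {F : Grid n → Finset (Finset V)} {a b c e w x : Grid n} {σ τ : Finset V}

theorem NoSwitch.ZBFin2_top_eq (h : NoSwitch d F σ a x) (hmono : Monotone F)
    (hcx : ∀ a, IsComplex (F a)) (hnd : NonDeg F) (hsq : IsUnitSquare a b c x) (hσb : σ ∈ F b)
    (hσc : σ ∉ F c) :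
    ZBFin2 d n F b x = ZBFin2 d n F a x ∧ ZBFin2 d n F c x = ZBFin2 d n F a x ∧
      ZBFin2 d n F x x = ZBFin2 d n F a x := by
  obtain ⟨hac_ab, hab_cx, hcx_bx⟩ := h.pairingNumber_eq_of_isUnitSquare hmono hnd hsq hσb hσc
  have ha : a ≠ ⊤ := hsq.bot_lt_top.ne_top
  have hb : b ≠ ⊤ := hsq.left_covBy_top.lt.ne_top
  have hc : c ≠ ⊤ := hsq.right_covBy_top.lt.ne_top
  have hbb := ZBFin2_self_of_covBy (d := d) hmono hcx hnd hsq.bot_covBy_left hb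
  have hcc := ZBFin2_self_of_covBy (d := d) hmono hcx hnd hsq.bot_covBy_right hc
  have hba := ZBFin2_eq_self (d := d) hmono hcx ha hsq.bot_covBy_left.le
  have hxa := ZBFin2_eq_self (d := d) hmono hcx ha hsq.bot_lt_top.le
  have hxb := ZBFin2_eq_self (d := d) hmono hcx hb hsq.left_covBy_top.le
  have hxc := ZBFin2_eq_self (d := d) hmono hcx hc hsq.right_covBy_top.le
  simp only [pairingNumber] at hac_ab hab_cx hcx_bx
  lia

theorem NoSwitch.ZBFin2_birth_eq_zero (h : NoSwitch d F σ a x) (hmono : Monotone F)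
    (hcx : ∀ a, IsComplex (F a)) (hnd : NonDeg F) (hsq : IsUnitSquare a b c x) (hσb : σ ∈ F b)
    (hσc : σ ∉ F c) (hxe : x ≤ e) :
    ZBFin2 d n F x e - ZBFin2 d n F b e - ZBFin2 d n F c e + ZBFin2 d n F a e = 0 := by
  rw [le_iff_reflTransGen_covBy] at hxe
  induction hxe with
  | refl =>
    obtain ⟨htop_b, htop_c, htop_x⟩ := h.ZBFin2_top_eq hmono hcx hnd hsq hσb hσc
    lia
  | @tail e f hxe hef ih =>
    have heq := (h.pairingNumber_eq_of_covBy hmono hnd hsq hσb hσc hef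
      (.inr (le_iff_reflTransGen_covBy.2 hxe))).1
    rw [pairingNumber, pairingNumber] at heq
    lia

theorem NoSwitch.ZBFin2_death_eq_zero_of_le (h : NoSwitch d F σ a x) (hmono : Monotone F)
    (hbot : F ⊥ = ∅) (hnd : NonDeg F) (hsq : IsUnitSquare a b c x) (hσb : σ ∈ F b)
    (hσc : σ ∉ F c) (hwa : w ≤ a) :
    ZBFin2 d n F w x - ZBFin2 d n F w b - ZBFin2 d n F w c + ZBFin2 d n F w a = 0 := by
  have hbw : Relation.ReflTransGen (· ⋖ ·) ⊥ w := le_iff_reflTransGen_covBy.1 bot_le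
  induction hbw with
  | refl => simp only [ZBFin2_bot hbot]; rfl
  | @tail u v _ huv ih =>
    have heq := (h.pairingNumber_eq_of_covBy hmono hnd hsq hσb hσc huv (.inl hwa)).2
    rw [pairingNumber, pairingNumber] at heq
    have := ih (huv.le.trans hwa)
    lia

-- Each first argument can be lowered to `w ⊓ a`, since no cycle through `σ` or `τ` is dead.
theorem NoSwitch.ZBFin2_death_eq_zero (h : NoSwitch d F σ a x) (hmono : Monotone F)
    (hcx : ∀ a, IsComplex (F a)) (hbot : F ⊥ = ∅) (hnd : NonDeg F) (hsq : IsUnitSquare a b c x)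
    (hσa : σ ∉ F a) (hσb : σ ∈ F b) (hσc : σ ∉ F c) (hτa : τ ∉ F a) (hτc : τ ∈ F c)
    (hwx : w ≤ x) :
    ZBFin2 d n F w x - ZBFin2 d n F (w ⊓ b) b - ZBFin2 d n F (w ⊓ c) c +
      ZBFin2 d n F (w ⊓ a) a = 0 := by
  have hab := hsq.bot_covBy_left
  have hac := hsq.bot_covBy_right
  obtain ⟨htop_b, htop_c, htop_x⟩ := h.ZBFin2_top_eq hmono hcx hnd hsq hσb hσc
  have hx : ZBFin2 d n F w x = ZBFin2 d n F (w ⊓ a) x := by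
    obtain rfl | hlt := hwx.eq_or_lt
    · rw [htop_x, inf_eq_right.2 hsq.bot_lt_top.le]
    rcases hsq.le_or_le_of_lt hlt with hwb | hwc
    · exact ZBFin2_inf_of_covBy hmono hnd hab hσb hσa htop_b hwb
    · exact ZBFin2_inf_of_covBy hmono hnd hac hτc hτa htop_c hwc
  have hb : ZBFin2 d n F (w ⊓ b) b = ZBFin2 d n F (w ⊓ a) b := by
    have hself := ZBFin2_self_of_covBy (d := d) hmono hcx hnd hab hsq.left_covBy_top.lt.ne_top
    rw [ZBFin2_inf_of_covBy hmono hnd hab hσb hσa hself inf_le_right, inf_assoc,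
      inf_eq_right.2 hab.le]
  have hc : ZBFin2 d n F (w ⊓ c) c = ZBFin2 d n F (w ⊓ a) c := by
    have hself := ZBFin2_self_of_covBy (d := d) hmono hcx hnd hac hsq.right_covBy_top.lt.ne_top
    rw [ZBFin2_inf_of_covBy hmono hnd hac hτc hτa hself inf_le_right, inf_assoc,
      inf_eq_right.2 hac.le]
  rw [hx, hb, hc]
  exact h.ZBFin2_death_eq_zero_of_le hmono hbot hnd hsq hσb hσc inf_le_right

theorem NoSwitch.eq_zero_of_isUnitSquare (h : NoSwitch d F σ a x) (hmono : Monotone F)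
    (hcx : ∀ a, IsComplex (F a)) (hbot : F ⊥ = ∅) (hnd : NonDeg F) (hsq : IsUnitSquare a b c x)
    (hσa : σ ∉ F a) (hσb : σ ∈ F b) (hσc : σ ∉ F c) (hτa : τ ∉ F a) (hτc : τ ∈ F c)
    {g : Grid n → Grid n → ℤ} (hg : IsMobiusInversion (ZBFin2 d n F) g) :
    (∀ y, x ≤ y → g x y = 0) ∧ ∀ w, w ≤ x → g w x = 0 :=
  ⟨hg.eq_zero_of_birth hsq fun _ => h.ZBFin2_birth_eq_zero hmono hcx hnd hsq hσb hσc,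
    hg.eq_zero_of_death hsq fun _ =>
      h.ZBFin2_death_eq_zero hmono hcx hbot hnd hsq hσa hσb hσc hτa hτc⟩

theorem pairing_switch_vanishing_general (hmono : Monotone F) (hcx : ∀ a, IsComplex (F a))
    (hbot : F ⊥ = ∅) (hnd : NonDeg F) (hστ : σ ≠ τ) (hsq : IsUnitSquare a b c x)
    (hσ : σ ∈ F x \ F a) (hτ : τ ∈ F x \ F a) (h : NoSwitch d F σ a x) {g : Grid n → Grid n → ℤ}
    (hg : IsMobiusInversion (ZBFin2 d n F) g) :
    (∀ y, x ≤ y → g x y = 0) ∧ ∀ w, w ≤ x → g w x = 0 := by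
  obtain ⟨hσx, hσa⟩ := Finset.mem_sdiff.1 hσ
  obtain ⟨hτx, hτa⟩ := Finset.mem_sdiff.1 hτ
  have hone {z : Grid n} (hz : a ⋖ z) (hσz : σ ∈ F z) (hτz : τ ∈ F z) : False :=
    hστ (hnd.eq_of_notMem hmono hz hσz hσa hτz hτa)
  rcases hnd.mem_and_mem_or_mem_and_mem hmono hsq hστ hσx hσa hτx hτa with
    ⟨hσb, hτc⟩ | ⟨hσc, hτb⟩
  · exact h.eq_zero_of_isUnitSquare hmono hcx hbot hnd hsq hσa hσb
      (hone hsq.bot_covBy_right · hτc) hτa hτc hg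
  · exact h.eq_zero_of_isUnitSquare hmono hcx hbot hnd hsq.symm hσa hσc
      (hone hsq.bot_covBy_left · hτb) hτa hτb hg

end Vanishing

/-- Pairing-switch vanishing: if two distinct simplices `σ, τ` appear together in the unit
square between `x − (1,1)` and `x` of a non-degenerate 2-filtration, and for every pair
of paths through the square (differing only in the intermediate step) the pairings of
`σ` and of `τ` are the same (no switch), then the generalized persistence diagram `g`
(the Möbius inversion of the birth–death function) vanishes on every interval having
`x` as an endpoint. -/
theorem pairing_switch_vanishing (d n : ℕ)
    (F : Fin (n+1) × Fin (n+1) → Finset (Finset V))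
    (hmono : Monotone F) (hcx : ∀ x, IsComplex (F x)) (hbot : F (0, 0) = ∅)
    (hnd : NonDeg F)
    (σ τ : Finset V) (hστ : σ ≠ τ)
    (x xm : Fin (n+1) × Fin (n+1))
    (hx1 : (xm.1 : ℕ) + 1 = (x.1 : ℕ)) (hx2 : (xm.2 : ℕ) + 1 = (x.2 : ℕ))
    (hadd : F x = insert σ (insert τ (F xm))) (hσ : σ ∉ F xm) (hτ : τ ∉ F xm)
    (hnoswitch : ∀ (p₁ p₂ : ℕ → Fin (n+1) × Fin (n+1)) (k : ℕ),
      IsPath n p₁ → IsPath n p₂ → k + 2 ≤ 2*n →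
      p₁ k = xm → p₁ (k+2) = x → p₂ k = xm → p₂ (k+2) = x →
      (∀ m : ℕ, m ≠ k+1 → p₁ m = p₂ m) →
      ∀ m : ℕ,
        (PairedAt d (2*n) (F ∘ p₁) (stepOf F p₁ σ k) m ↔
          PairedAt d (2*n) (F ∘ p₂) (stepOf F p₂ σ k) m) ∧
        (PairedAt d (2*n) (F ∘ p₁) m (stepOf F p₁ σ k) ↔
          PairedAt d (2*n) (F ∘ p₂) m (stepOf F p₂ σ k)) ∧
        (PairedAt d (2*n) (F ∘ p₁) (stepOf F p₁ τ k) m ↔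
          PairedAt d (2*n) (F ∘ p₂) (stepOf F p₂ τ k) m) ∧
        (PairedAt d (2*n) (F ∘ p₁) m (stepOf F p₁ τ k) ↔
          PairedAt d (2*n) (F ∘ p₂) m (stepOf F p₂ τ k)))
    (g : Fin (n+1) × Fin (n+1) → Fin (n+1) × Fin (n+1) → ℤ)
    (hg : ∀ c e : Fin (n+1) × Fin (n+1), c ≤ e →
      ZBFin2 d n F c e =
        ∑ a : Fin (n+1) × Fin (n+1), ∑ b : Fin (n+1) × Fin (n+1),
          if a ≤ b ∧ a ≤ c ∧ b ≤ e then g a b else 0) :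
    (∀ y : Fin (n+1) × Fin (n+1), x ≤ y → g x y = 0) ∧
    (∀ w : Fin (n+1) × Fin (n+1), w ≤ x → g w x = 0) :=
  pairing_switch_vanishing_general hmono hcx hbot hnd hστ
    (isUnitSquare_of_val_add_one_eq hx1 hx2) (by simp [hadd, hσ]) (by simp [hadd, hτ])
    (fun p q k ⟨hp, hq, hk, hpa, hpx, hqa, hqx, hpq⟩ m =>
      (hnoswitch p q k hp hq hk hpa hpx hqa hqx hpq m).imp_right And.left) hg
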